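/- Dynamic policy achieves constant expected gap (Theorem 2): Consider the dynamic policy π^d for horizon T, which at each step t sets ω(t) = 1 if and only if the current gap max_i x_i(t−1) − (t−1)/N is at least a_d·(T−t)·q/N, where a_d = 1/(5·binom(N,2)). Then there exists a constant C, depending only on N and q, such that E[Gap^d(T)] ≤ C for every horizon T. -/

import Mathlib

/-!
Let `b = a_d q / N` be the slope of the flexing threshold and consider the exponential potential
`Φ_s = ∑ i, exp (η (x_i - s/N - b (T - s)))`, where `b (T - s)` is (up to one step) the threshold.

* If the policy does not flex, every exponent is nonpositive, so `Φ_s ≤ N` and `Φ_{s+1}` is bounded.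
* If it flexes, write `w_i` for the summands, `W` for their sum and `w_m` for the smallest one.
  The expected summand of the chosen bin is at most
  `W / N - κ (W - N w_m)` with `κ = q / (2 C(N,2))`: a pair `{i, m}` contributes its minimum `w_m`
  instead of its average, and for the other pairs the minimum is bounded by the average.
  Since the least load is at most the average load, `w_m ≤ 1`. As `b < κ`, the resulting factor
  `exp (η (b - 1/N)) (1 + (exp η - 1) (1/N - κ))` is below `1` for small `η > 0`.

In both cases `E[Φ_{s+1} | x(s)] ≤ ρ Φ_s + K` with `ρ < 1`, hence `E[Φ_T]` is bounded uniformly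
in `T`, and `η Gap(T) ≤ Φ_T` because the threshold vanishes at time `T`.
-/

attribute [local instance] Classical.propDecidable

/-- An arrival type: (is-flex-ball, preferred bin, flex set). -/
abbrev Arrival (N : ℕ) := Bool × Fin N × Finset (Fin N)

/-- Mass of a single arrival: `f ~ Bernoulli(q)`, `p` uniform on `Fin N`,
`F` uniform on the 2-element subsets of `Fin N`, mutually independent. -/
noncomputable def arrivalProb (N : ℕ) (q : ℝ) (a : Arrival N) : ℝ :=
  (if a.1 then q else 1 - q) * (1 / (N : ℝ)) *
    (if a.2.2.card = 2 then 1 / (N.choose 2 : ℝ) else 0)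

/-- Mass of a sequence of `T` i.i.d. arrivals. -/
noncomputable def seqMass (N T : ℕ) (q : ℝ) (xs : Fin T → Arrival N) : ℝ :=
  ∏ t, arrivalProb N q (xs t)

/-- Expectation of a real random variable on the canonical space of `T` arrivals. -/
noncomputable def expec (N T : ℕ) (q : ℝ) (X : (Fin T → Arrival N) → ℝ) : ℝ :=
  ∑ xs : Fin T → Arrival N, seqMass N T q xs * X xs

/-- Probability of an event on the canonical space of `T` arrivals. -/
noncomputable def prob (N T : ℕ) (q : ℝ) (A : (Fin T → Arrival N) → Prop) : ℝ :=
  ∑ xs : Fin T → Arrival N, if A xs then seqMass N T q xs else 0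

/-- The least-loaded bin in `F` (ties broken in favor of the smallest index). -/
noncomputable def argminBin {N : ℕ} [NeZero N] (x : Fin N → ℕ) (F : Finset (Fin N)) : Fin N :=
  if hF : (F.filter fun i => ∀ j ∈ F, x i ≤ x j).Nonempty
  then (F.filter fun i => ∀ j ∈ F, x i ≤ x j).min' hF
  else 0

/-- One step of the greedy (least-loaded) allocation: if the ball is a flex ball and
flexing is exerted, it goes to the least-loaded bin of its flex set (lexicographic
tie-breaking); otherwise it goes to its preferred bin. -/
noncomputable def greedyStep {N : ℕ} [NeZero N] (flex : Bool) (a : Arrival N)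
    (x : Fin N → ℕ) : Fin N → ℕ :=
  fun i => if i = (if a.1 && flex then argminBin x a.2.2 else a.2.1) then x i + 1 else x i

/-- Load process under a flexing rule `dec` (which may depend on the whole realization,
the time, and the current loads), with greedy placement of flexed flex balls. -/
noncomputable def greedyLoads {N T : ℕ} [NeZero N]
    (dec : (Fin T → Arrival N) → ℕ → (Fin N → ℕ) → Bool)
    (xs : Fin T → Arrival N) : ℕ → Fin N → ℕ
  | 0 => fun _ => 0
  | t + 1 =>
    if h : t < T then
      greedyStep (dec xs t (greedyLoads dec xs t)) (xs ⟨t, h⟩) (greedyLoads dec xs t)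
    else greedyLoads dec xs t

/-- The maximum load over all bins. -/
noncomputable def maxLoad {N : ℕ} (x : Fin N → ℕ) : ℕ := Finset.univ.sup x

/-- `Gap(t)` : maximum load minus the average load `t/N`. -/
noncomputable def gap {N : ℕ} (x : Fin N → ℕ) (t : ℕ) : ℝ :=
  (maxLoad x : ℝ) - (t : ℝ) / (N : ℝ)

/-- Number of flexed balls `M = ∑_t f_t ω(t)`. -/
noncomputable def numFlexed {N T : ℕ} [NeZero N]
    (dec : (Fin T → Arrival N) → ℕ → (Fin N → ℕ) → Bool) (xs : Fin T → Arrival N) : ℕ :=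
  ∑ t : Fin T, if (xs t).1 && dec xs (t : ℕ) (greedyLoads dec xs (t : ℕ)) then 1 else 0

/-- Flexing rule of a "static"-type policy: flex exactly from period
`T - c·√(T log T)` on (ball `t` corresponds to step index `t-1`). -/
noncomputable def lateDec (N T : ℕ) (c : ℝ) :
    (Fin T → Arrival N) → ℕ → (Fin N → ℕ) → Bool :=
  fun _ s _ =>
    if (T : ℝ) - c * Real.sqrt ((T : ℝ) * Real.log (T : ℝ)) ≤ ((s : ℝ) + 1) then true else false

/-- Flexing rule of the dynamic policy: flex at period `t = s+1` iff the current gap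
`Gap(t-1)` is at least `a_d (T - t) q / N` with `a_d = 1/(5 C(N,2))`. -/
noncomputable def dynDec (N T : ℕ) (q : ℝ) :
    (Fin T → Arrival N) → ℕ → (Fin N → ℕ) → Bool :=
  fun _ s x =>
    if (1 / (5 * (N.choose 2 : ℝ))) * ((T : ℝ) - ((s : ℝ) + 1)) * q / (N : ℝ) ≤ gap x s
    then true else false

/-- First time (within horizon `T`) at which the maximum load equals `S`. -/
noncomputable def hitTime {N : ℕ} (T S : ℕ) (x : ℕ → Fin N → ℕ) : ℕ :=
  if h : ((Finset.range (T + 1)).filter fun t => maxLoad (x t) = S).Nonempty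
  then ((Finset.range (T + 1)).filter fun t => maxLoad (x t) = S).min' h
  else T

/-- The dynamic opaque policy: the flag records whether the trigger condition
`Gap(t) ≥ c_d (T-t) q / N` (with `c_d = 1/(10 C(N,2))`) has held at some time `≤ t`;
from then on every flex ball is flexed (greedy placement). Returns (flag, loads). -/
noncomputable def dynOpaque (N T : ℕ) [NeZero N] (q : ℝ) (xs : Fin T → Arrival N) :
    ℕ → Bool × (Fin N → ℕ)
  | 0 =>
    (if (1 / (10 * (N.choose 2 : ℝ))) * (T : ℝ) * q / (N : ℝ) ≤ 0 then true else false,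
      fun _ => 0)
  | t + 1 =>
    let p := dynOpaque N T q xs t
    let x' := if h : t < T then greedyStep p.1 (xs ⟨t, h⟩) p.2 else p.2
    (p.1 ||
      (if (1 / (10 * (N.choose 2 : ℝ))) * ((T : ℝ) - ((t : ℝ) + 1)) * q / (N : ℝ) ≤
          gap x' (t + 1)
       then true else false),
     x')

/-- Number of flexed balls `D = ∑_{t=1}^{R} f_t ω(t)` during one replenishment cycle,
for a policy given by the flexing rule `dec`. -/
noncomputable def cycleFlexCount (N T : ℕ) [NeZero N]
    (dec : (Fin T → Arrival N) → ℕ → (Fin N → ℕ) → Bool) (S : ℕ)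
    (xs : Fin T → Arrival N) : ℕ :=
  ∑ t ∈ Finset.range (hitTime T S (greedyLoads dec xs)),
    if h : t < T then (if (xs ⟨t, h⟩).1 && dec xs t (greedyLoads dec xs t) then 1 else 0)
    else 0

/-- Number of flexed balls during one replenishment cycle of the dynamic opaque policy. -/
noncomputable def dynFlexCount (N T : ℕ) [NeZero N] (q : ℝ) (S : ℕ)
    (xs : Fin T → Arrival N) : ℕ :=
  ∑ t ∈ Finset.range (hitTime T S fun u => (dynOpaque N T q xs u).2),
    if h : t < T then (if (xs ⟨t, h⟩).1 && (dynOpaque N T q xs t).1 then 1 else 0) else 0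

/-! ### The least-loaded bin of a random pair -/

lemma argminBin_spec {N : ℕ} [NeZero N] (x : Fin N → ℕ) (F : Finset (Fin N)) (hF : F.Nonempty) :
    argminBin x F ∈ F ∧ ∀ j ∈ F, x (argminBin x F) ≤ x j := by
  have h : (F.filter fun i => ∀ j ∈ F, x i ≤ x j).Nonempty := by
    obtain ⟨i, hi, hmin⟩ := F.exists_min_image x hF
    exact ⟨i, by simp only [Finset.mem_filter]; exact ⟨hi, hmin⟩⟩
  have h2 := Finset.min'_mem _ h
  rw [argminBin, dif_pos h]
  exact Finset.mem_filter.mp h2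

lemma card_pairs_two {N : ℕ} (m i : Fin N) (hi : i ≠ m) :
    ((Finset.univ : Finset (Finset (Fin N))).filter
      fun F => F.card = 2 ∧ m ∈ F ∧ i ∈ F).card = 1 := by
  rw [Finset.card_eq_one]
  refine ⟨{i, m}, ?_⟩
  ext F
  simp only [Finset.mem_filter, Finset.mem_univ, true_and, Finset.mem_singleton]
  constructor
  · rintro ⟨h2, hm, hi'⟩
    symm
    apply Finset.eq_of_subset_of_card_le
    · intro j hj
      simp only [Finset.mem_insert, Finset.mem_singleton] at hj
      rcases hj with rfl | rfl <;> assumption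
    · rw [h2, Finset.card_pair hi]
  · rintro rfl
    exact ⟨Finset.card_pair hi, by simp, by simp⟩

lemma card_pairs_one {N : ℕ} (m : Fin N) :
    ((Finset.univ : Finset (Finset (Fin N))).filter
      fun F => F.card = 2 ∧ m ∈ F).card = N - 1 := by
  -- the pairs through `m` are the sets `{j, m}` with `j ≠ m`
  have : ((Finset.univ : Finset (Finset (Fin N))).filter fun F => F.card = 2 ∧ m ∈ F)
      = (Finset.univ.erase m).image fun j => ({j, m} : Finset (Fin N)) := by
    ext F
    simp only [Finset.mem_filter, Finset.mem_univ, true_and, Finset.mem_image, Finset.mem_erase,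
      and_true]
    constructor
    · rintro ⟨h2, hm⟩
      obtain ⟨a, c, hac, rfl⟩ := Finset.card_eq_two.mp h2
      simp only [Finset.mem_insert, Finset.mem_singleton] at hm
      rcases hm with rfl | rfl
      · exact ⟨c, hac.symm, Finset.pair_comm _ _⟩
      · exact ⟨a, hac, rfl⟩
    · rintro ⟨j, hj, rfl⟩
      exact ⟨Finset.card_pair hj, by simp⟩
  rw [this, Finset.card_image_of_injOn, Finset.card_erase_of_mem (Finset.mem_univ m),
    Finset.card_univ, Fintype.card_fin]
  intro j hj k hk hjk
  have h1 : j ∈ ({k, m} : Finset (Fin N)) := by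
    have : j ∈ ({j, m} : Finset (Fin N)) := by simp
    exact (show ({j, m} : Finset (Fin N)) = {k, m} from hjk) ▸ this
  simp only [Finset.coe_erase, Finset.coe_univ, Set.mem_sdiff, Set.mem_univ,
    Set.mem_singleton_iff, true_and] at hj
  simpa [hj] using h1

lemma sum_pairs {N : ℕ} (w : Fin N → ℝ) :
    (∑ F : Finset (Fin N), if F.card = 2 then ∑ i ∈ F, w i else 0) = ((N : ℝ) - 1) * ∑ i, w i := by
  have h : ∀ F : Finset (Fin N), (if F.card = 2 then ∑ i ∈ F, w i else 0)
      = ∑ i, if F.card = 2 ∧ i ∈ F then w i else 0 := by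
    intro F
    by_cases h2 : F.card = 2
    · simp [h2]
    · simp [h2]
  simp_rw [h]
  rw [Finset.sum_comm, Finset.mul_sum]
  refine Finset.sum_congr rfl fun i _ => ?_
  rw [← Finset.sum_filter, Finset.sum_const, card_pairs_one, nsmul_eq_mul,
    Nat.cast_sub (Nat.one_le_iff_ne_zero.mpr (Fin.pos i).ne')]
  simp

lemma sum_pairs_through {N : ℕ} (d : Fin N → ℝ) (m : Fin N) (hd : d m = 0) :
    (∑ F : Finset (Fin N), if F.card = 2 ∧ m ∈ F then ∑ i ∈ F, d i else 0) = ∑ i, d i := by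
  have h : ∀ F : Finset (Fin N), (if F.card = 2 ∧ m ∈ F then ∑ i ∈ F, d i else 0)
      = ∑ i, if F.card = 2 ∧ m ∈ F ∧ i ∈ F then d i else 0 := by
    intro F
    by_cases h2 : F.card = 2 ∧ m ∈ F
    · simp [h2]
    · rw [if_neg h2, Finset.sum_eq_zero]
      intro i _
      rw [if_neg]
      tauto
  simp_rw [h]
  rw [Finset.sum_comm]
  refine Finset.sum_congr rfl fun i _ => ?_
  by_cases hi : i = m
  · simp [hi, hd]
  · rw [← Finset.sum_filter, Finset.sum_const, card_pairs_two m i hi, one_nsmul]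

/-- Over a uniform pair, the summand of the least-loaded bin falls short of the overall average
by at least `(W - N w_m) / (2 C(N,2))`, for any bin `m`; stated here multiplied by `C(N,2)`. -/
lemma sum_argmin_le {N : ℕ} [NeZero N] (x : Fin N → ℕ) (w : Fin N → ℝ)
    (hw : ∀ i j, x i ≤ x j → w i ≤ w j) (m : Fin N) :
    (∑ F : Finset (Fin N), if F.card = 2 then w (argminBin x F) else 0)
      ≤ ((N : ℝ) - 1) / 2 * ∑ i, w i - (∑ i, w i - N * w m) / 2 := by
  have key : ∀ F : Finset (Fin N), (if F.card = 2 then w (argminBin x F) else 0)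
      ≤ (if F.card = 2 then ∑ i ∈ F, w i else 0) / 2
        - (if F.card = 2 ∧ m ∈ F then ∑ i ∈ F, (w i - w m) else 0) / 2 := by
    intro F
    by_cases h2 : F.card = 2
    · have hne : F.Nonempty := Finset.card_pos.mp (by omega)
      obtain ⟨_, hmin⟩ := argminBin_spec x F hne
      by_cases hmF : m ∈ F
      · have := hw _ _ (hmin m hmF)
        simp only [h2, hmF, and_self, if_true, Finset.sum_sub_distrib, Finset.sum_const,
          nsmul_eq_mul]
        push_cast
        linarith
      · have h3 : ∑ i ∈ F, w (argminBin x F) ≤ ∑ i ∈ F, w i :=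
          Finset.sum_le_sum fun i hi => hw _ _ (hmin i hi)
        simp only [Finset.sum_const, h2, nsmul_eq_mul] at h3
        simp only [h2, hmF, and_false, if_true, if_false]
        push_cast at h3
        linarith
    · simp [h2]
  refine (Finset.sum_le_sum fun F _ => key F).trans ?_
  rw [Finset.sum_sub_distrib, ← Finset.sum_div, ← Finset.sum_div, sum_pairs,
    sum_pairs_through (fun i => w i - w m) m (by simp), Finset.sum_sub_distrib]
  simp only [Finset.sum_const, Finset.card_univ, Fintype.card_fin, nsmul_eq_mul]
  linarith

/-! ### Expectations over arrivals -/

lemma choose_two_pos {N : ℕ} (hN : 2 ≤ N) : (0 : ℝ) < (N.choose 2 : ℝ) := by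
  exact_mod_cast Nat.choose_pos hN

lemma sum_pair_ind {N : ℕ} (hN : 2 ≤ N) :
    (∑ F : Finset (Fin N), if F.card = 2 then 1 / (N.choose 2 : ℝ) else 0) = 1 := by
  have h : ((Finset.univ : Finset (Finset (Fin N))).filter fun F => F.card = 2).card
      = N.choose 2 := by
    have : ((Finset.univ : Finset (Finset (Fin N))).filter fun F => F.card = 2)
        = Finset.powersetCard 2 Finset.univ := by
      ext F; simp [Finset.mem_powersetCard]
    rw [this, Finset.card_powersetCard, Finset.card_univ, Fintype.card_fin]
  rw [← Finset.sum_filter, Finset.sum_const, h, nsmul_eq_mul]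
  have := choose_two_pos hN
  field_simp

lemma arrivalProb_nonneg {N : ℕ} {q : ℝ} (hq0 : 0 < q) (hq1 : q ≤ 1) (a : Arrival N) :
    0 ≤ arrivalProb N q a := by
  unfold arrivalProb
  have : 0 ≤ 1 - q := by linarith
  split_ifs <;> positivity

/-- Expectation of a function of the chosen bin when the ball is flexed. -/
lemma sum_arrival_flex {N : ℕ} (hN : 2 ≤ N) (q : ℝ) (u : Fin N → ℝ) (c : Finset (Fin N) → Fin N) :
    (∑ a : Arrival N, arrivalProb N q a * u (if a.1 then c a.2.2 else a.2.1))
      = q * ((∑ F : Finset (Fin N), if F.card = 2 then u (c F) else 0) / (N.choose 2 : ℝ))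
        + (1 - q) * ((∑ i, u i) / N) := by
  have hN0 : (N : ℝ) ≠ 0 := by
    have : N ≠ 0 := by omega
    exact_mod_cast this
  rw [Fintype.sum_prod_type, Fintype.sum_bool, Fintype.sum_prod_type, Fintype.sum_prod_type]
  simp only [arrivalProb, if_true]
  congr 1
  · trans ∑ _p : Fin N, ∑ F : Finset (Fin N), (q * (1 / (N : ℝ)) *
        (if F.card = 2 then 1 / (N.choose 2 : ℝ) else 0)) * u (c F)
    · refine Finset.sum_congr rfl fun p _ => Finset.sum_congr rfl fun F _ => ?_
      simp
    rw [Finset.sum_const, Finset.card_univ, Fintype.card_fin, nsmul_eq_mul, Finset.sum_div,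
      Finset.mul_sum, Finset.mul_sum]
    refine Finset.sum_congr rfl fun F _ => ?_
    split_ifs
    · field_simp
    · simp
  · simp only [Bool.false_eq_true, if_false]
    have : ∀ p : Fin N, (∑ F : Finset (Fin N), (1 - q) * (1 / (N : ℝ)) *
        (if F.card = 2 then 1 / (N.choose 2 : ℝ) else 0) * u p) = (1 - q) * (u p / N) := by
      intro p
      rw [← Finset.sum_mul, ← Finset.mul_sum, sum_pair_ind hN]
      ring
    simp_rw [this]
    rw [← Finset.mul_sum, Finset.sum_div]

lemma sum_arrivalProb {N : ℕ} (hN : 2 ≤ N) (q : ℝ) : ∑ a : Arrival N, arrivalProb N q a = 1 := by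
  have hN0 : (N : ℝ) ≠ 0 := by
    have : N ≠ 0 := by omega
    exact_mod_cast this
  have h := sum_arrival_flex hN q (fun _ => 1) (fun _ => ⟨0, by omega⟩)
  have h1 : (∑ F : Finset (Fin N), if F.card = 2 then (1 : ℝ) else 0) / (N.choose 2 : ℝ) = 1 := by
    rw [Finset.sum_div]
    refine Eq.trans ?_ (sum_pair_ind hN)
    refine Finset.sum_congr rfl fun F _ => ?_
    split_ifs <;> simp
  rw [h1] at h
  simpa [hN0] using h

lemma expec_mono {N T : ℕ} {q : ℝ} (hq0 : 0 < q) (hq1 : q ≤ 1) {X Y : (Fin T → Arrival N) → ℝ}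
    (h : ∀ xs, X xs ≤ Y xs) : expec N T q X ≤ expec N T q Y :=
  Finset.sum_le_sum fun xs _ => mul_le_mul_of_nonneg_left (h xs)
    (Finset.prod_nonneg fun _ _ => arrivalProb_nonneg hq0 hq1 _)

/-- If `h` ignores the arrival at time `t`, that arrival may be averaged out. -/
lemma expec_split {N T : ℕ} (hN : 2 ≤ N) (q : ℝ) {β : Type*} (t : Fin T)
    (h : (Fin T → Arrival N) → β) (g : β → Arrival N → ℝ)
    (hind : ∀ xs ys : Fin T → Arrival N, (∀ i, i ≠ t → xs i = ys i) → h xs = h ys) :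
    expec N T q (fun xs => g (h xs) (xs t))
      = expec N T q (fun xs => ∑ a, arrivalProb N q a * g (h xs) a) := by
  obtain ⟨n, rfl⟩ : ∃ n, T = n + 1 := ⟨T - 1, by have := t.pos; omega⟩
  unfold expec seqMass
  rw [← (Fin.insertNthEquiv (fun _ => Arrival N) t).sum_comp,
    ← (Fin.insertNthEquiv (fun _ => Arrival N) t).sum_comp,
    Fintype.sum_prod_type_right, Fintype.sum_prod_type_right]
  refine Finset.sum_congr rfl fun ys _ => ?_
  obtain ⟨a₀⟩ : Nonempty (Arrival N) := ⟨(true, ⟨0, by omega⟩, ∅)⟩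
  obtain ⟨v, hh⟩ : ∃ v, ∀ a, h (Fin.insertNthEquiv (fun _ => Arrival N) t (a, ys)) = v := by
    refine ⟨h (Fin.insertNthEquiv (fun _ => Arrival N) t (a₀, ys)), fun a => hind _ _ ?_⟩
    intro i hi
    obtain ⟨j, rfl⟩ := Fin.exists_succAbove_eq hi
    simp
  simp only [hh]
  simp only [Fin.insertNthEquiv_apply, Fin.prod_univ_succAbove _ t, Fin.insertNth_apply_same,
    Fin.insertNth_apply_succAbove]
  simp only [mul_assoc]
  rw [← Finset.sum_mul, sum_arrivalProb hN, one_mul, Finset.mul_sum]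
  refine Finset.sum_congr rfl fun a _ => ?_
  ring

lemma expec_affine {N T : ℕ} (hN : 2 ≤ N) (q r k : ℝ) (X : (Fin T → Arrival N) → ℝ) :
    expec N T q (fun xs => r * X xs + k) = r * expec N T q X + k := by
  have h1 : ∑ xs : Fin T → Arrival N, seqMass N T q xs = 1 := by
    unfold seqMass
    rw [← Fintype.prod_sum (fun (_ : Fin T) (a : Arrival N) => arrivalProb N q a)]
    simp [sum_arrivalProb hN]
  unfold expec
  simp only [mul_add, Finset.sum_add_distrib, ← Finset.sum_mul, h1, one_mul, Finset.mul_sum]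
  congr 1
  refine Finset.sum_congr rfl fun a _ => ?_
  ring

/-! ### The load process -/

lemma greedyLoads_congr {N T : ℕ} [NeZero N] (q : ℝ) (xs ys : Fin T → Arrival N) (s : ℕ)
    (h : ∀ i : Fin T, (i : ℕ) < s → xs i = ys i) :
    greedyLoads (dynDec N T q) xs s = greedyLoads (dynDec N T q) ys s := by
  induction s with
  | zero => rfl
  | succ s ih =>
    have ih' := ih fun i hi => h i (by omega)
    simp only [greedyLoads]
    split_ifs with hs
    · rw [ih', h ⟨s, hs⟩ (by simp)]
      rfl
    · exact ih'

lemma sum_greedyStep {N : ℕ} [NeZero N] (flex : Bool) (a : Arrival N) (x : Fin N → ℕ) :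
    ∑ i, greedyStep flex a x i = ∑ i, x i + 1 := by
  have : ∀ i, greedyStep flex a x i
      = x i + if i = (if a.1 && flex then argminBin x a.2.2 else a.2.1) then 1 else 0 := by
    intro i
    unfold greedyStep
    split_ifs <;> rfl
  simp_rw [this]
  rw [Finset.sum_add_distrib]
  simp

lemma sum_greedyLoads {N T : ℕ} [NeZero N] (dec : (Fin T → Arrival N) → ℕ → (Fin N → ℕ) → Bool)
    (xs : Fin T → Arrival N) (s : ℕ) (hs : s ≤ T) : ∑ i, greedyLoads dec xs s i = s := by
  induction s with
  | zero => simp [greedyLoads]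
  | succ s ih =>
    have ih' := ih (by omega)
    simp only [greedyLoads, dif_pos (show s < T by omega)]
    rw [sum_greedyStep, ih']

/-! ### The exponential potential -/

/-- Contribution of bin `i` to the potential at time `s` for loads `x`: the exponential, at scale
`η`, of the amount by which the centred load exceeds the line `b (T - s)`. -/
noncomputable def binPot {N : ℕ} (η b : ℝ) (T s : ℕ) (x : Fin N → ℕ) (i : Fin N) : ℝ :=
  Real.exp (η * ((x i : ℝ) - s / N - b * ((T : ℝ) - s)))

/-- The exponential potential `∑ i, exp (η (x_i - s/N - b (T - s)))`. -/
noncomputable def pot {N : ℕ} (η b : ℝ) (T s : ℕ) (x : Fin N → ℕ) : ℝ :=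
  ∑ i, binPot η b T s x i

lemma pot_add_ball {N : ℕ} (η b : ℝ) (T s : ℕ) (x : Fin N → ℕ) (c : Fin N) :
    pot η b T (s + 1) (fun i => if i = c then x i + 1 else x i)
      = Real.exp (η * (b - 1 / N)) * (pot η b T s x + (Real.exp η - 1) * binPot η b T s x c) := by
  have h : ∀ i, binPot η b T (s + 1) (fun i => if i = c then x i + 1 else x i) i
      = Real.exp (η * (b - 1 / N)) *
        (binPot η b T s x i + if i = c then (Real.exp η - 1) * binPot η b T s x c else 0) := by
    intro i
    simp only [binPot]
    split_ifs with hi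
    · subst hi
      have : ∀ A : ℝ, Real.exp A + (Real.exp η - 1) * Real.exp A = Real.exp (η + A) := by
        intro A; rw [Real.exp_add]; ring
      rw [this, ← Real.exp_add]
      congr 1
      push_cast
      ring
    · rw [add_zero, ← Real.exp_add]
      congr 1
      push_cast
      ring
  unfold pot
  simp_rw [h]
  rw [← Finset.mul_sum, Finset.sum_add_distrib]
  simp

/-- A small scale `η` at which the exponential moment of a step with downward drift contracts. -/
lemma exists_scale (b p κ : ℝ) (h : b < κ) :
    ∃ η : ℝ, 0 < η ∧ Real.exp (η * (b - p)) * (1 + (Real.exp η - 1) * (p - κ)) < 1 := by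
  have hd : HasDerivAt
      (fun η : ℝ => Real.exp (η * (b - p)) * (1 + (Real.exp η - 1) * (p - κ))) (b - κ) 0 := by
    have h1 : HasDerivAt (fun η : ℝ => Real.exp (η * (b - p)))
        (Real.exp (0 * (b - p)) * (1 * (b - p))) 0 := ((hasDerivAt_id' 0).mul_const (b - p)).exp
    have h2 : HasDerivAt (fun η : ℝ => 1 + (Real.exp η - 1) * (p - κ))
        (Real.exp 0 * (p - κ)) 0 :=
      (((Real.hasDerivAt_exp 0).sub_const 1).mul_const (p - κ)).const_add 1
    refine (h1.mul h2).congr_deriv ?_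
    simp
  have hs := hd.tendsto_slope
  have hev := hs.eventually (gt_mem_nhds (show b - κ < 0 by linarith))
  have hev' : ∀ᶠ η in nhdsWithin (0 : ℝ) (Set.Ioi 0), slope
      (fun η : ℝ => Real.exp (η * (b - p)) * (1 + (Real.exp η - 1) * (p - κ))) 0 η < 0 :=
    hev.filter_mono (nhdsWithin_mono 0 fun y hy => ne_of_gt hy)
  obtain ⟨η, hη, hpos⟩ := (hev'.and self_mem_nhdsWithin).exists
  refine ⟨η, hpos, ?_⟩
  have hpos' : (0 : ℝ) < η := hpos
  rw [slope_def_field, div_neg_iff] at hη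
  simp at hη
  rcases hη with h | h <;> linarith

lemma le_maxLoad {N : ℕ} (x : Fin N → ℕ) (i : Fin N) : x i ≤ maxLoad x :=
  Finset.le_sup (f := x) (Finset.mem_univ i)

/-- One-step drift of the potential when the policy flexes. -/
lemma drift_flex {N : ℕ} [NeZero N] (hN : 2 ≤ N) (q η b : ℝ) (hq0 : 0 < q)
    (hη : 0 < η) (hb : 0 ≤ b) (T s : ℕ) (hs : s < T) (x : Fin N → ℕ) (hx : ∑ i, x i = s) :
    (∑ a : Arrival N, arrivalProb N q a * pot η b T (s + 1) (greedyStep true a x))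
      ≤ Real.exp (η * (b - 1 / N)) *
          (1 + (Real.exp η - 1) * (1 / N - q / (2 * (N.choose 2 : ℝ)))) * pot η b T s x
        + Real.exp (η * (b - 1 / N)) * (Real.exp η - 1) * (q / (2 * (N.choose 2 : ℝ)) * N) := by
  have hNpos : (0 : ℝ) < N := by exact_mod_cast (show 0 < N by omega)
  have hN1 : (0 : ℝ) < (N : ℝ) - 1 := by
    have : (2 : ℝ) ≤ N := by exact_mod_cast hN
    linarith
  have hD := choose_two_pos hN
  have hDeq : (N.choose 2 : ℝ) = N * ((N : ℝ) - 1) / 2 := Nat.cast_choose_two ℝ N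
  have hexp : 0 < Real.exp η - 1 := by
    have := Real.add_one_lt_exp hη.ne'
    linarith
  obtain ⟨m, hm⟩ := Finite.exists_min x
  -- the least load is at most the average `s / N`
  have hmle : (x m : ℝ) ≤ s / N := by
    rw [le_div_iff₀ hNpos]
    have : ∑ _i : Fin N, x m ≤ ∑ i, x i := Finset.sum_le_sum fun i _ => hm i
    rw [hx, Finset.sum_const, Finset.card_univ, Fintype.card_fin, smul_eq_mul, mul_comm] at this
    exact_mod_cast this
  have hsT : (s : ℝ) ≤ T := by exact_mod_cast hs.le
  have hwm : binPot η b T s x m ≤ 1 := by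
    unfold binPot
    rw [Real.exp_le_one_iff]
    have : 0 ≤ b * ((T : ℝ) - s) := mul_nonneg hb (by linarith)
    exact mul_nonpos_of_nonneg_of_nonpos hη.le (by linarith)
  have hmono : ∀ i j, x i ≤ x j → binPot η b T s x i ≤ binPot η b T s x j := by
    intro i j hij
    unfold binPot
    have : (x i : ℝ) ≤ x j := by exact_mod_cast hij
    gcongr
  have hA := sum_argmin_le x (binPot η b T s x) hmono m
  have hstep : ∀ a : Arrival N, arrivalProb N q a * pot η b T (s + 1) (greedyStep true a x)
      = Real.exp (η * (b - 1 / N)) * (pot η b T s x * arrivalProb N q a + (Real.exp η - 1) *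
        (arrivalProb N q a * binPot η b T s x (if a.1 then argminBin x a.2.2 else a.2.1))) := by
    intro a
    have := pot_add_ball η b T s x (if a.1 then argminBin x a.2.2 else a.2.1)
    unfold greedyStep
    simp only [Bool.and_true]
    rw [this]
    ring
  simp_rw [hstep]
  rw [← Finset.mul_sum, Finset.sum_add_distrib, ← Finset.mul_sum, ← Finset.mul_sum,
    sum_arrivalProb hN, sum_arrival_flex hN q (binPot η b T s x) (argminBin x)]
  have hpot : ∑ i, binPot η b T s x i = pot η b T s x := rfl
  rw [hpot] at hA ⊢
  set W := pot η b T s x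
  set S := ∑ F : Finset (Fin N), if F.card = 2 then binPot η b T s x (argminBin x F) else 0
  set D := (N.choose 2 : ℝ)
  have hchoice : q * (S / D) + (1 - q) * (W / N)
      ≤ (1 / N - q / (2 * D)) * W + q / (2 * D) * N := by
    have h1 : S / D ≤ W / N - 1 / (2 * D) * W + 1 / (2 * D) * N := by
      have h2 : S ≤ ((N : ℝ) - 1) / 2 * W - (W - N) / 2 := by nlinarith
      have h3 : S / D ≤ (((N : ℝ) - 1) / 2 * W - (W - N) / 2) / D := by gcongr
      have h4 : (((N : ℝ) - 1) / 2 * W - (W - N) / 2) / D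
          = W / N - 1 / (2 * D) * W + 1 / (2 * D) * N := by
        rw [hDeq]
        field_simp
        ring
      linarith
    have h5 := mul_le_mul_of_nonneg_left h1 hq0.le
    have h6 : q * (W / N - 1 / (2 * D) * W + 1 / (2 * D) * N) + (1 - q) * (W / N)
        = (1 / N - q / (2 * D)) * W + q / (2 * D) * N := by ring
    linarith
  have h7 := mul_le_mul_of_nonneg_left hchoice hexp.le
  have h8 : W * 1 + (Real.exp η - 1) * (q * (S / D) + (1 - q) * (W / N))
      ≤ W + (Real.exp η - 1) * ((1 / N - q / (2 * D)) * W + q / (2 * D) * N) := by linarith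
  refine (mul_le_mul_of_nonneg_left h8 (Real.exp_pos _).le).trans (le_of_eq ?_)
  ring

/-- Below the threshold the potential is at most `N`, so it stays bounded after one more step,
whatever the placement of the ball. -/
lemma drift_noflex {N : ℕ} [NeZero N] (hN : 2 ≤ N) (q η b : ℝ) (hq0 : 0 < q) (hq1 : q ≤ 1)
    (hη : 0 < η) (hb : 0 ≤ b) (T s : ℕ) (x : Fin N → ℕ) (flex : Bool)
    (hgap : gap x s < b * ((T : ℝ) - (s + 1))) :
    (∑ a : Arrival N, arrivalProb N q a * pot η b T (s + 1) (greedyStep flex a x))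
      ≤ Real.exp (η * (b - 1 / N)) * (N + (Real.exp η - 1)) := by
  have hexp : 0 < Real.exp η - 1 := by
    have := Real.add_one_lt_exp hη.ne'
    linarith
  have hw : ∀ i, binPot η b T s x i ≤ 1 := by
    intro i
    unfold binPot
    rw [Real.exp_le_one_iff]
    have h1 : (x i : ℝ) ≤ maxLoad x := by exact_mod_cast le_maxLoad x i
    unfold gap at hgap
    exact mul_nonpos_of_nonneg_of_nonpos hη.le (by nlinarith)
  have hW : pot η b T s x ≤ N := by
    unfold pot
    refine (Finset.sum_le_sum fun i _ => hw i).trans ?_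
    simp
  have hstep : ∀ a : Arrival N, pot η b T (s + 1) (greedyStep flex a x)
      ≤ Real.exp (η * (b - 1 / N)) * (N + (Real.exp η - 1)) := by
    intro a
    have h := pot_add_ball η b T s x (if a.1 && flex then argminBin x a.2.2 else a.2.1)
    unfold greedyStep
    rw [h]
    refine mul_le_mul_of_nonneg_left (add_le_add hW ?_) (Real.exp_pos _).le
    exact mul_le_of_le_one_right hexp.le (hw _)
  refine (Finset.sum_le_sum fun a _ =>
    mul_le_mul_of_nonneg_left (hstep a) (arrivalProb_nonneg hq0 hq1 a)).trans ?_
  rw [← Finset.sum_mul, sum_arrivalProb hN, one_mul]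

lemma pot_nonneg {N : ℕ} (η b : ℝ) (T s : ℕ) (x : Fin N → ℕ) : 0 ≤ pot η b T s x :=
  Finset.sum_nonneg fun _ _ => (Real.exp_pos _).le

lemma gap_le_pot {N : ℕ} [NeZero N] (η b : ℝ) (hη : 0 < η) (T : ℕ) (x : Fin N → ℕ) :
    gap x T ≤ 1 / η * pot η b T T x + 0 := by
  obtain ⟨i, _, hi⟩ := Finset.exists_mem_eq_sup Finset.univ Finset.univ_nonempty x
  have h1 : η * gap x T ≤ binPot η b T T x i := by
    unfold binPot gap maxLoad
    rw [hi, sub_self, mul_zero, sub_zero]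
    have := Real.add_one_le_exp (η * ((x i : ℝ) - T / N))
    linarith
  have h2 : binPot η b T T x i ≤ pot η b T T x :=
    Finset.single_le_sum (f := binPot η b T T x) (fun _ _ => (Real.exp_pos _).le)
      (Finset.mem_univ i)
  rw [add_zero, one_div, ← div_eq_inv_mul, le_div_iff₀ hη]
  linarith

/-- **Theorem 2** (dynamic policy achieves constant expected gap): the dynamic policy,
which at step `t` flexes iff the current gap `max_i x_i(t-1) - (t-1)/N` is at least
`a_d (T-t) q / N` with `a_d = 1/(5 C(N,2))`, has `E[Gap(T)] ≤ C` for a constant `C`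
depending only on `N` and `q`. -/
theorem dynamic_gap_bound (N : ℕ) [NeZero N] (hN : 2 ≤ N) (q : ℝ)
    (hq0 : 0 < q) (hq1 : q ≤ 1) :
    ∃ C : ℝ, ∀ T : ℕ,
      expec N T q (fun xs => gap (greedyLoads (dynDec N T q) xs T) T) ≤ C := by
  have hNpos : (0 : ℝ) < N := by exact_mod_cast (show 0 < N by omega)
  have hN1 : (1 : ℝ) ≤ N := by exact_mod_cast (show 1 ≤ N by omega)
  have hD := choose_two_pos hN
  obtain ⟨b, hbdef⟩ : ∃ b : ℝ, b = 1 / (5 * (N.choose 2 : ℝ)) * q / N := ⟨_, rfl⟩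
  have hb : 0 ≤ b := by rw [hbdef]; positivity
  have hbκ : b < q / (2 * (N.choose 2 : ℝ)) := by
    have h1 : b ≤ 1 / (5 * (N.choose 2 : ℝ)) * q := by
      rw [hbdef]; exact div_le_self (by positivity) hN1
    have h2 : q / (2 * (N.choose 2 : ℝ)) - 1 / (5 * (N.choose 2 : ℝ)) * q
        = 3 / 10 * (q / (N.choose 2 : ℝ)) := by field_simp; norm_num
    have h3 : 0 < q / (N.choose 2 : ℝ) := by positivity
    linarith
  obtain ⟨η, hη, hρ⟩ := exists_scale b (1 / N) _ hbκ
  have hexp : 0 < Real.exp η - 1 := by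
    have := Real.add_one_lt_exp hη.ne'
    linarith
  set ρ₀ := Real.exp (η * (b - 1 / N)) *
    (1 + (Real.exp η - 1) * (1 / N - q / (2 * (N.choose 2 : ℝ)))) with hρ₀
  -- the contraction factor is truncated at `0` so that both drift bounds hold with it
  set ρ := max ρ₀ 0
  have hρ1 : ρ < 1 := max_lt hρ one_pos
  have hρ0 : 0 ≤ ρ := le_max_right _ _
  set K₁ := Real.exp (η * (b - 1 / N)) * (Real.exp η - 1) * (q / (2 * (N.choose 2 : ℝ)) * N)
  set K₂ := Real.exp (η * (b - 1 / N)) * (N + (Real.exp η - 1))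
  have hK₁ : 0 ≤ K₁ := by positivity
  have hK₂ : 0 ≤ K₂ := by positivity
  have hdrift : ∀ (T s : ℕ), s < T → ∀ (xs : Fin T → Arrival N) (x : Fin N → ℕ), ∑ i, x i = s →
      (∑ a : Arrival N,
        arrivalProb N q a * pot η b T (s + 1) (greedyStep (dynDec N T q xs s x) a x))
        ≤ ρ * pot η b T s x + (K₁ + K₂) := by
    intro T s hs xs x hx
    have hp := pot_nonneg η b T s x
    have hthr : 1 / (5 * (N.choose 2 : ℝ)) * ((T : ℝ) - ((s : ℝ) + 1)) * q / (N : ℝ)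
        = b * ((T : ℝ) - (s + 1)) := by rw [hbdef]; ring
    by_cases hd : 1 / (5 * (N.choose 2 : ℝ)) * ((T : ℝ) - ((s : ℝ) + 1)) * q / (N : ℝ) ≤ gap x s
    · have : dynDec N T q xs s x = true := by unfold dynDec; rw [if_pos hd]
      rw [this]
      have h1 := drift_flex hN q η b hq0 hη hb T s hs x hx
      have h2 : ρ₀ * pot η b T s x ≤ ρ * pot η b T s x :=
        mul_le_mul_of_nonneg_right (le_max_left _ _) hp
      linarith
    · rw [hthr, not_le] at hd
      have h1 := drift_noflex hN q η b hq0 hq1 hη hb T s x (dynDec N T q xs s x) hd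
      have h2 : 0 ≤ ρ * pot η b T s x := mul_nonneg hρ0 hp
      linarith
  have hK : 0 ≤ (K₁ + K₂) / (1 - ρ) := div_nonneg (by linarith) (by linarith)
  have hbound : ∀ (T s : ℕ), s ≤ T →
      expec N T q (fun xs => pot η b T s (greedyLoads (dynDec N T q) xs s))
        ≤ N + (K₁ + K₂) / (1 - ρ) := by
    intro T s
    induction s with
    | zero =>
      intro _
      have h0 : ∀ xs : Fin T → Arrival N,
          pot η b T 0 (greedyLoads (dynDec N T q) xs 0) ≤ 0 * (0 : ℝ) + N := by
        intro xs
        have : ∀ i, binPot η b T 0 (greedyLoads (dynDec N T q) xs 0) i ≤ 1 := by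
          intro i
          unfold binPot
          rw [Real.exp_le_one_iff]
          have : 0 ≤ b * (T : ℝ) := by positivity
          refine mul_nonpos_of_nonneg_of_nonpos hη.le ?_
          simp [greedyLoads]
          linarith
        refine (Finset.sum_le_sum fun i _ => this i).trans ?_
        simp
      refine (expec_mono hq0 hq1 h0).trans ?_
      rw [expec_affine hN q 0 N (fun _ => 0)]
      linarith
    | succ s ih =>
      intro hs
      have hsT : s < T := by omega
      have h1 : ∀ xs : Fin T → Arrival N,
          pot η b T (s + 1) (greedyLoads (dynDec N T q) xs (s + 1))
          = (fun (x : Fin N → ℕ) a => pot η b T (s + 1)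
              (greedyStep (dynDec N T q (fun _ => (true, 0, ∅)) s x) a x))
            (greedyLoads (dynDec N T q) xs s) (xs ⟨s, hsT⟩) := by
        intro xs
        simp only [greedyLoads, dif_pos hsT]
        rfl
      simp_rw [h1]
      rw [expec_split hN q ⟨s, hsT⟩ (fun xs => greedyLoads (dynDec N T q) xs s)
        (fun (x : Fin N → ℕ) a => pot η b T (s + 1)
              (greedyStep (dynDec N T q (fun _ => (true, 0, ∅)) s x) a x))]
      · have h2 := expec_mono (N := N) (T := T) hq0 hq1 fun xs =>
          hdrift T s hsT (fun _ => (true, 0, ∅)) (greedyLoads (dynDec N T q) xs s)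
            (sum_greedyLoads _ xs s hsT.le)
        refine h2.trans ?_
        rw [expec_affine hN]
        have h3 := mul_le_mul_of_nonneg_left (ih hsT.le) hρ0
        have h4 : ρ * ((K₁ + K₂) / (1 - ρ)) + (K₁ + K₂) = (K₁ + K₂) / (1 - ρ) := by
          have : (1 - ρ) ≠ 0 := by linarith
          field_simp
          ring
        nlinarith
      · intro xs ys hxy
        refine greedyLoads_congr q xs ys s fun i hi => hxy i ?_
        rintro rfl
        simp at hi
  refine ⟨1 / η * (N + (K₁ + K₂) / (1 - ρ)) + 0, fun T => ?_⟩
  refine (expec_mono hq0 hq1 fun xs =>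
    gap_le_pot η b hη T (greedyLoads (dynDec N T q) xs T)).trans ?_
  rw [expec_affine hN]
  have := hbound T T le_rfl
  gcongr
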